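/- Let x : ℕ → Fin 2 be pattern Sturmian and suppose the orbit closure of x contains a simple Toeplitz sequence y. Then x lies in the orbit closure of y; in particular, x is recurrent (indeed uniformly recurrent). (This is the paper's Theorem 5.1 in the special case where the nearly simple Toeplitz sequence is simple Toeplitz.) -/

import Mathlib

open Set

abbrev Seq2 := ℕ → Fin 2

def patLang (x : Seq2) (τ : Finset ℕ) : Set ((s : τ) → Fin 2) :=
  {w | ∃ m : ℕ, ∀ s : τ, w s = x (m + (s : ℕ))}

noncomputable def pstar (x : Seq2) (n : ℕ) : ℕ :=
  sSup {c : ℕ | ∃ τ : Finset ℕ, τ.card = n ∧ (patLang x τ).ncard = c}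

def PatternSturmian (x : Seq2) : Prop := ∀ n : ℕ, 1 ≤ n → pstar x n = 2 * n

def Recurrent (x : Seq2) : Prop :=
  ∀ L : ℕ, ∃ M : ℕ, 1 ≤ M ∧ ∀ i < L, x i = x (M + i)

def Syndetic (S : Set ℕ) : Prop :=
  ∃ g : ℕ, ∀ n : ℕ, ∃ m ∈ S, n ≤ m ∧ m < n + g

def UniformlyRecurrent (x : Seq2) : Prop :=
  ∀ L : ℕ, Syndetic {M : ℕ | 1 ≤ M ∧ ∀ i < L, x i = x (M + i)}

def orbitClosure (x : Seq2) : Set Seq2 :=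
  closure {y : Seq2 | ∃ m : ℕ, y = fun n => x (m + n)}

/-- A simple Toeplitz sequence: there is a period structure `nk` (with `nk 0 = 1`,
`ik 0 = 0` as conventions), a coherent sequence of nonconstant residues `ik`, and
letters `a k` taking both values infinitely often, such that every position in the
residue class `ik k mod nk k` but not in the class `ik (k+1) mod nk (k+1)` carries the
letter `a (k+1)`. -/
def SimpleToeplitz (y : Seq2) : Prop :=
  ∃ (nk ik : ℕ → ℕ) (a : ℕ → Fin 2),
    nk 0 = 1 ∧ ik 0 = 0 ∧
    (∀ k, 1 ≤ nk k ∧ nk k ∣ nk (k + 1)) ∧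
    (∀ k, 1 ≤ k → nk k < nk (k + 1)) ∧
    (∀ k, ik k < nk k) ∧
    (∀ k, ik (k + 1) % nk k = ik k) ∧
    (∀ i : Fin 2, ∀ N : ℕ, ∃ k, N ≤ k ∧ a k = i) ∧
    (∀ k m : ℕ, m % nk k = ik k → m % nk (k + 1) ≠ ik (k + 1) → y m = a (k + 1))

/-! If `n 0 ∣ n 1 ∣ ⋯` are the periods of `y`, with letters merged so that they alternate, then
shifts of `y` look, from any chosen position `P` and up to any level `l`, like a Toeplitz sequence
centred at `P`: a position that separates from `P` at level `k < l` carries the letter `b k`.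

Take `P ≡ S` modulo `n (k + 3)` and `T` separating from `P` at level `k ≥ 1`. Aiming shifts at
`P`, `S` and `T`, one sees in `y`, hence in `x`, all six words `(p, q, r)` over `(P, S, T)` with
`p = q` or `r = b k`. Since `p*(3) = 6`, there is no seventh, so `x P ≠ x S` forces `x T = b k`: any
position `P` whose letter is not determined by its class modulo a large period is a centre for the
Toeplitz structure of `x` at the levels `k ≥ 1`. At level `0` this counting is not available, and
one compares instead with a window in which `x` copies `y`. So every prefix of `x` is Toeplitz
around some centre, and therefore occurs in `y` along a whole arithmetic progression. -/

theorem exists_lt_add_modEq (a c : ℕ) {g : ℕ} (hg : 0 < g) : ∃ r < g, a + r ≡ c [MOD g] := by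
  have : NeZero g := ⟨hg.ne'⟩
  refine ⟨(c - a : ZMod g).val, ZMod.val_lt _, ?_⟩
  rw [← ZMod.natCast_eq_natCast_iff]
  simp

theorem fin_two_eq_of_ne_of_ne : ∀ {a b c : Fin 2}, a ≠ c → b ≠ c → a = b := by decide

section Recurrence

variable {x y : Seq2}

theorem mem_orbitClosure_iff : y ∈ orbitClosure x ↔ ∀ R, ∃ M, ∀ i < R, x (M + i) = y i := by
  rw [orbitClosure, (PiNat.isTopologicalBasis_cylinders _).mem_closure_iff]
  constructor
  · intro h R
    obtain ⟨_, hz, M, rfl⟩ := h _ ⟨y, R, rfl⟩ (PiNat.self_mem_cylinder y R)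
    exact ⟨M, hz⟩
  · rintro h _ ⟨z, R, rfl⟩ hyz
    obtain ⟨M, hM⟩ := h R
    rw [← PiNat.mem_cylinder_iff_eq.1 hyz]
    exact ⟨_, hM, M, rfl⟩

theorem UniformlyRecurrent.recurrent (h : UniformlyRecurrent x) : Recurrent x := by
  intro L
  obtain ⟨g, hg⟩ := h L
  obtain ⟨M, hM, -⟩ := hg 0
  exact ⟨M, hM⟩

/-- Every prefix of `x` occurs in `y` at all positions of some arithmetic progression. This is the
form in which the Toeplitz structure of `y` is passed on to `x`. -/
def OccursPeriodicallyIn (x y : Seq2) : Prop :=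
  ∀ N, ∃ w g, 0 < g ∧ ∀ z, z ≡ w [MOD g] → ∀ t < N, y (z + t) = x t

theorem OccursPeriodicallyIn.mem_orbitClosure (h : OccursPeriodicallyIn x y) :
    x ∈ orbitClosure y := by
  refine mem_orbitClosure_iff.2 fun R => ?_
  obtain ⟨w, g, -, hw⟩ := h R
  exact ⟨w, hw w (Nat.ModEq.refl w)⟩

theorem OccursPeriodicallyIn.uniformlyRecurrent (h : OccursPeriodicallyIn x y) :
    UniformlyRecurrent x := by
  intro L
  obtain ⟨w, g, hg, hw⟩ := h L
  refine ⟨g + 1, fun N => ?_⟩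
  -- An occurrence in `y` of a long prefix of `x` meets the progression of occurrences of the short
  -- prefix.
  obtain ⟨w', g', -, hw'⟩ := h (N + 1 + g + L)
  obtain ⟨r, hr, hwr⟩ := exists_lt_add_modEq (w' + (N + 1)) w hg
  refine ⟨N + 1 + r, ⟨by omega, fun t ht => ?_⟩, by omega, by omega⟩
  calc x t = y (w' + (N + 1) + r + t) := (hw _ hwr t ht).symm
    _ = y (w' + (N + 1 + r + t)) := by simp only [add_assoc]
    _ = x (N + 1 + r + t) := hw' w' (Nat.ModEq.refl w') _ (by omega)

end Recurrence

section PatternComplexity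

theorem ncard_patLang_le_pstar (x : Seq2) (τ : Finset ℕ) :
    (patLang x τ).ncard ≤ pstar x τ.card := by
  refine le_csSup ⟨2 ^ τ.card, ?_⟩ ⟨τ, rfl, rfl⟩
  rintro _ ⟨σ, hσ, rfl⟩
  calc (patLang x σ).ncard ≤ Nat.card (σ → Fin 2) := Set.ncard_le_card _
    _ = 2 ^ τ.card := by simp [hσ]

theorem ncard_range_le_pstar (x : Seq2) {ι : Type*} [Fintype ι] {f : ι → ℕ}
    (hf : Function.Injective f) :
    (range fun m s => x (m + f s)).ncard ≤ pstar x (Fintype.card ι) := by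
  let τ := Finset.univ.map ⟨f, hf⟩
  let restrict (w : τ → Fin 2) (s : ι) : Fin 2 :=
    w ⟨f s, Finset.mem_map_of_mem _ (Finset.mem_univ s)⟩
  have hsub : (range fun m s => x (m + f s)) ⊆ restrict '' patLang x τ := by
    rintro _ ⟨m, rfl⟩
    exact ⟨fun s => x (m + s), ⟨m, fun _ => rfl⟩, rfl⟩
  calc (range fun m s => x (m + f s)).ncard ≤ (restrict '' patLang x τ).ncard :=
        Set.ncard_le_ncard hsub
    _ ≤ (patLang x τ).ncard := Set.ncard_image_le
    _ ≤ pstar x τ.card := ncard_patLang_le_pstar x τ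
    _ = pstar x (Fintype.card ι) := by rw [Finset.card_map, Finset.card_univ]

theorem ncard_words_eq_six (e : Fin 2) :
    {w : Fin 3 → Fin 2 | w 0 = w 1 ∨ w 2 = e}.ncard = 6 := by
  rw [Set.ncard_eq_toFinset_card']
  revert e
  decide

theorem eq_or_eq_of_pstar_le_six {x : Seq2} (hx : pstar x 3 ≤ 6) {P S T : ℕ} (hPS : P ≠ S)
    (hPT : P ≠ T) (hST : S ≠ T) {e : Fin 2}
    (h : ∀ p q r, p = q ∨ r = e → ∃ m, x (m + P) = p ∧ x (m + S) = q ∧ x (m + T) = r) :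
    x P = x S ∨ x T = e := by
  have hinj : Function.Injective ![P, S, T] := by
    simp [Function.Injective, Fin.forall_fin_succ, hPS, hPT, hST, hPS.symm, hPT.symm, hST.symm]
  let words : Set (Fin 3 → Fin 2) := range fun m s => x (m + ![P, S, T] s)
  have hsub : {w : Fin 3 → Fin 2 | w 0 = w 1 ∨ w 2 = e} ⊆ words := by
    intro w hw
    obtain ⟨m, h0, h1, h2⟩ := h _ _ _ hw
    refine ⟨m, funext fun s => ?_⟩
    fin_cases s <;> assumption
  have hcard : words.ncard ≤ {w : Fin 3 → Fin 2 | w 0 = w 1 ∨ w 2 = e}.ncard := by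
    rw [ncard_words_eq_six]
    exact (ncard_range_le_pstar x hinj).trans hx
  have hword : (fun s => x (0 + ![P, S, T] s)) ∈ words := mem_range_self 0
  rw [← Set.eq_of_subset_of_ncard_le hsub hcard] at hword
  simpa using hword

end PatternComplexity

section Periods

variable {n i : ℕ → ℕ} {k l m : ℕ}

/-- The position `m` agrees with the odometer point `i`, given by its residues `i k` modulo `n k`,
at level `k` but no longer at level `k + 1`. A natural number `P` is the odometer point
`fun _ => P`, so that holes of Toeplitz structures and ordinary positions are treated alike. -/
def SplitsAt (n i : ℕ → ℕ) (k m : ℕ) : Prop :=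
  m ≡ i k [MOD n k] ∧ ¬ m ≡ i (k + 1) [MOD n (k + 1)]

theorem exists_splitsAt (hkl : k ≤ l) (hk : m ≡ i k [MOD n k]) (hl : ¬ m ≡ i l [MOD n l]) :
    ∃ r, k ≤ r ∧ r < l ∧ SplitsAt n i r m := by
  induction l, hkl using Nat.le_induction with
  | base => exact absurd hk hl
  | succ l hkl ih =>
    by_cases hm : m ≡ i l [MOD n l]
    · exact ⟨l, hkl, l.lt_succ_self, hm, hl⟩
    · obtain ⟨r, hkr, hrl, hr⟩ := ih hm
      exact ⟨r, hkr, hrl.trans l.lt_succ_self, hr⟩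

theorem splitsAt_const_comm {P T : ℕ} :
    SplitsAt n (fun _ => P) k T ↔ SplitsAt n (fun _ => T) k P :=
  and_congr Nat.ModEq.comm (not_congr Nat.ModEq.comm)

/-- The sequences of periods of Toeplitz structures: strict divisibility chains starting at `1`. -/
structure IsPeriodChain (n : ℕ → ℕ) : Prop where
  zero : n 0 = 1
  dvd_succ : ∀ k, n k ∣ n (k + 1)
  lt_succ : ∀ k, n k < n (k + 1)

namespace IsPeriodChain

theorem dvd (h : IsPeriodChain n) (hkl : k ≤ l) : n k ∣ n l :=
  Nat.rel_of_forall_rel_succ_of_le (· ∣ ·) h.dvd_succ hkl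

theorem strictMono (h : IsPeriodChain n) : StrictMono n :=
  strictMono_nat_of_lt_succ h.lt_succ

theorem lt_apply (h : IsPeriodChain n) (k : ℕ) : k < n k := by
  induction k with
  | zero => simp [h.zero]
  | succ k ih => exact Nat.lt_of_le_of_lt ih (h.lt_succ k)

theorem pos (h : IsPeriodChain n) (k : ℕ) : 0 < n k :=
  k.zero_le.trans_lt (h.lt_apply k)

theorem modEq_zero (h : IsPeriodChain n) (a c : ℕ) : a ≡ c [MOD n 0] := by
  rw [h.zero]
  exact Nat.modEq_one

theorem splitsAt_add (h : IsPeriodChain n) (hi : i (k + 1) ≡ i k [MOD n k]) :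
    SplitsAt n i k (i (k + 1) + n k) := by
  refine ⟨by simpa using hi, fun hmod => ?_⟩
  have hdvd : n (k + 1) ∣ n k := by simpa [Nat.modEq_zero_iff_dvd] using hmod
  exact (h.lt_succ k).not_ge (Nat.le_of_dvd (h.pos k) hdvd)

theorem splitsAt_congr (h : IsPeriodChain n) {m' : ℕ} (hm : m ≡ m' [MOD n (k + 1)]) :
    SplitsAt n i k m ↔ SplitsAt n i k m' := by
  have hm' : m ≡ m' [MOD n k] := hm.of_dvd (h.dvd_succ k)
  exact and_congr ⟨hm'.symm.trans, hm'.trans⟩ (not_congr ⟨hm.symm.trans, hm.trans⟩)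

theorem splitsAt_const_congr (h : IsPeriodChain n) {P P' : ℕ} (hP : P ≡ P' [MOD n (k + 1)]) :
    SplitsAt n (fun _ => P) k m ↔ SplitsAt n (fun _ => P') k m := by
  rw [splitsAt_const_comm, h.splitsAt_congr hP, splitsAt_const_comm]

theorem exists_splitsAt_of_ne (h : IsPeriodChain n) {P S : ℕ} (hPS : P ≠ S)
    (hk : S ≡ P [MOD n k]) : ∃ r, k ≤ r ∧ SplitsAt n (fun _ => P) r S := by
  have hlt : P + S + k < n (P + S + k) := h.lt_apply _
  obtain ⟨r, hkr, -, hr⟩ := exists_splitsAt (i := fun _ => P) (l := P + S + k) (by omega) hk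
    fun hmod => hPS (Nat.ModEq.eq_of_lt_of_lt hmod (by omega) (by omega)).symm
  exact ⟨r, hkr, hr⟩

end IsPeriodChain

end Periods

section Skeleton

/-- A Toeplitz structure on `y`: the hole `i` is an odometer point over the periods `n`, and `y`
has the letter `b k` at the positions that split from the hole at level `k`. -/
structure IsToeplitzSkeleton {α : Type*} (n i : ℕ → ℕ) (b y : ℕ → α) : Prop
    extends IsPeriodChain n where
  coherent : ∀ k, i (k + 1) ≡ i k [MOD n k]
  eq_letter : ∀ {k m}, SplitsAt n i k m → y m = b k

namespace IsToeplitzSkeleton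

variable {α : Type*} {n i : ℕ → ℕ} {b y : ℕ → α}

theorem modEq_of_le (h : IsToeplitzSkeleton n i b y) {k l : ℕ} (hkl : k ≤ l) :
    i l ≡ i k [MOD n k] := by
  induction l, hkl using Nat.le_induction with
  | base => exact Nat.ModEq.refl _
  | succ l hkl ih => exact ((h.coherent l).of_dvd (h.dvd hkl)).trans ih

theorem comp (h : IsToeplitzSkeleton n i b y) {φ : ℕ → ℕ} (hφ : StrictMono φ) (hφ0 : φ 0 = 0)
    (hb : ∀ k l, φ k ≤ l → l < φ (k + 1) → b l = b (φ k)) :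
    IsToeplitzSkeleton (n ∘ φ) (i ∘ φ) (b ∘ φ) y where
  zero := by rw [Function.comp_apply, hφ0, h.zero]
  dvd_succ k := h.dvd (hφ k.lt_succ_self).le
  lt_succ k := h.strictMono (hφ k.lt_succ_self)
  coherent k := h.modEq_of_le (hφ k.lt_succ_self).le
  eq_letter {k m} hm := by
    obtain ⟨r, hkr, hrk, hr⟩ := exists_splitsAt (hφ k.lt_succ_self).le hm.1 hm.2
    rw [h.eq_letter hr, hb k r hkr hrk, Function.comp_apply]

theorem exists_centered (h : IsToeplitzSkeleton n i b y) (P l : ℕ) :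
    ∃ w, ∀ z, z ≡ w [MOD n (l + 1)] →
      (∀ Q, Q ≡ P [MOD n (l + 1)] → y (z + Q) = b l) ∧
      ∀ k < l, ∀ Q, SplitsAt n (fun _ => P) k Q → y (z + Q) = b k := by
  obtain ⟨w, -, hw⟩ := exists_lt_add_modEq P (i (l + 1) + n l) (h.pos (l + 1))
  refine ⟨w, fun z hz => ?_⟩
  have hzP : z + P ≡ i (l + 1) + n l [MOD n (l + 1)] :=
    (hz.add_right P).trans (add_comm P w ▸ hw)
  have hsplit : SplitsAt n i l (z + P) :=
    (h.splitsAt_congr hzP).2 (h.splitsAt_add (h.coherent l))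
  refine ⟨fun Q hQ => h.eq_letter ((h.splitsAt_congr (hQ.add_left z)).2 hsplit),
    fun k hk Q hQ => h.eq_letter ⟨?_, fun hmod => hQ.2 ?_⟩⟩
  · calc z + Q ≡ z + P [MOD n k] := hQ.1.add_left z
      _ ≡ i l [MOD n k] := hsplit.1.of_dvd (h.dvd hk.le)
      _ ≡ i k [MOD n k] := h.modEq_of_le hk.le
  · refine Nat.ModEq.add_left_cancel' z ?_
    calc z + Q ≡ i (k + 1) [MOD n (k + 1)] := hmod
      _ ≡ i l [MOD n (k + 1)] := (h.modEq_of_le hk).symm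
      _ ≡ z + P [MOD n (k + 1)] := (hsplit.1.of_dvd (h.dvd hk)).symm

end IsToeplitzSkeleton

theorem exists_next_ne {α : Type*} {b : ℕ → α} {N : ℕ} (hb : ∃ l, N ≤ l ∧ b l ≠ b N) :
    ∃ N', N < N' ∧ b N' ≠ b N ∧ ∀ l, N ≤ l → l < N' → b l = b N := by
  classical
  obtain ⟨hle, hne⟩ := Nat.find_spec hb
  refine ⟨Nat.find hb, hle.lt_of_ne fun heq => hne (by rw [← heq]), hne, fun l hNl hl => ?_⟩
  exact not_not.1 fun hbl => Nat.find_min hb hl ⟨hNl, hbl⟩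

theorem exists_strictMono_alternating {α : Type*} {b : ℕ → α}
    (hb : ∀ N, ∃ l, N ≤ l ∧ b l ≠ b N) :
    ∃ φ : ℕ → ℕ, StrictMono φ ∧ φ 0 = 0 ∧ (∀ k, b (φ (k + 1)) ≠ b (φ k)) ∧
      ∀ k l, φ k ≤ l → l < φ (k + 1) → b l = b (φ k) := by
  choose next hlt hne heq using fun N => exists_next_ne (hb N)
  refine ⟨fun k => next^[k] 0, strictMono_nat_of_lt_succ fun k => ?_, rfl, fun k => ?_,
    fun k => ?_⟩ <;> simp only [Function.iterate_succ_apply']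
  exacts [hlt _, hne _, heq _]

theorem SimpleToeplitz.exists_skeleton {y : Seq2} (hy : SimpleToeplitz y) :
    ∃ n i b, IsToeplitzSkeleton n i b y ∧ ∀ c N, ∃ l, N ≤ l ∧ b l = c := by
  obtain ⟨nk, ik, a, hn0, -, hn, hlt, hik, hcoh, hinf, hval⟩ := hy
  -- `nk 0 = nk 1 = 1` is allowed, in which case the levels are counted from `1`.
  obtain ⟨s, hs, hlt_s⟩ : ∃ s, nk s = 1 ∧ ∀ k, nk (s + k) < nk (s + k + 1) := by
    by_cases h1 : nk 1 = 1
    · exact ⟨1, h1, fun k => hlt _ (by omega)⟩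
    · refine ⟨0, hn0, fun k => ?_⟩
      rcases k.eq_zero_or_pos with rfl | hk
      · have := (hn 1).1
        simp only [zero_add]
        omega
      · exact hlt _ (by omega)
  have hmod : ∀ {k m}, m ≡ ik k [MOD nk k] ↔ m % nk k = ik k := fun {k m} => by
    rw [Nat.ModEq, Nat.mod_eq_of_lt (hik k)]
  refine ⟨fun k => nk (s + k), fun k => ik (s + k), fun k => a (s + k + 1),
    ⟨⟨hs, fun k => (hn _).2, hlt_s⟩, fun k => hmod.2 (hcoh _), fun hm => ?_⟩, fun c N => ?_⟩
  · exact hval _ _ (hmod.1 hm.1) fun h => hm.2 (hmod.2 h)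
  · obtain ⟨l, hl, rfl⟩ := hinf c (s + N + 1)
    exact ⟨l - s - 1, by omega, congrArg a (by omega)⟩

theorem SimpleToeplitz.exists_alternating_skeleton {y : Seq2} (hy : SimpleToeplitz y) :
    ∃ n i b, IsToeplitzSkeleton n i b y ∧ ∀ k, b (k + 1) ≠ b k := by
  obtain ⟨n, i, b, h, hinf⟩ := hy.exists_skeleton
  obtain ⟨φ, hφ, hφ0, hne, heq⟩ := exists_strictMono_alternating (b := b) fun N => by
    obtain ⟨c, hc⟩ := exists_ne (b N)
    obtain ⟨l, hl, rfl⟩ := hinf c N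
    exact ⟨l, hl, hc⟩
  exact ⟨_, _, _, h.comp hφ hφ0 heq, hne⟩

end Skeleton

section Alternating

variable {n i : ℕ → ℕ} {b : ℕ → Fin 2} {x y : Seq2}

theorem exists_letter_eq (hb : ∀ k, b (k + 1) ≠ b k) (N : ℕ) (c : Fin 2) :
    ∃ l, N ≤ l ∧ l ≤ N + 1 ∧ b l = c := by
  by_cases hc : c = b N
  · exact ⟨N, le_rfl, N.le_succ, hc.symm⟩
  · exact ⟨N + 1, N.le_succ, le_rfl, fin_two_eq_of_ne_of_ne (hb N) hc⟩

theorem exists_word_of_eq_letter (h : IsToeplitzSkeleton n i b y) (hb : ∀ k, b (k + 1) ≠ b k)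
    {P S T k : ℕ} (hPS : P ≠ S) (hmod : S ≡ P [MOD n (k + 3)])
    (hT : SplitsAt n (fun _ => P) k T) (p q : Fin 2) :
    ∃ m, y (m + P) = p ∧ y (m + S) = q ∧ y (m + T) = b k := by
  obtain ⟨j, hkj, hS⟩ := h.exists_splitsAt_of_ne hPS hmod
  have hPj : SplitsAt n (fun _ => S) j P := splitsAt_const_comm.1 hS
  have hTS : SplitsAt n (fun _ => S) k T :=
    (h.splitsAt_const_congr (hmod.of_dvd (h.dvd (by omega)))).2 hT
  by_cases hpq : p = q
  · obtain ⟨l, hkl, hlk, rfl⟩ := exists_letter_eq hb (k + 1) p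
    obtain ⟨m, hm⟩ := h.exists_centered P l
    obtain ⟨hnear, hfar⟩ := hm m rfl
    exact ⟨m, hnear P rfl, hpq ▸ hnear S (hmod.of_dvd (h.dvd (by omega))),
      hfar k (by omega) T hT⟩
  by_cases hq : q = b j
  · obtain ⟨l, hjl, -, rfl⟩ := exists_letter_eq hb (j + 1) p
    obtain ⟨m, hm⟩ := h.exists_centered P l
    obtain ⟨hnear, hfar⟩ := hm m rfl
    exact ⟨m, hnear P rfl, hq ▸ hfar j (by omega) S hS, hfar k (by omega) T hT⟩
  · have hp : p = b j := fin_two_eq_of_ne_of_ne hpq (Ne.symm hq)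
    obtain ⟨l, hjl, -, rfl⟩ := exists_letter_eq hb (j + 1) q
    obtain ⟨m, hm⟩ := h.exists_centered S l
    obtain ⟨hnear, hfar⟩ := hm m rfl
    exact ⟨m, hp ▸ hfar j (by omega) P hPj, hnear S rfl, hfar k (by omega) T hTS⟩

theorem exists_word_of_ne_letter (h : IsToeplitzSkeleton n i b y) (hb : ∀ k, b (k + 1) ≠ b k)
    {P S T k : ℕ} (hk : k ≠ 0) (hmod : S ≡ P [MOD n (k + 1)])
    (hT : SplitsAt n (fun _ => P) k T) (p : Fin 2) {r : Fin 2} (hr : r ≠ b k) :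
    ∃ m, y (m + P) = p ∧ y (m + S) = p ∧ y (m + T) = r := by
  by_cases hp : p = b k
  · have hPk : SplitsAt n (fun _ => T) k P := splitsAt_const_comm.1 hT
    obtain ⟨m, hm⟩ := h.exists_centered T (k + 1)
    obtain ⟨hnear, hfar⟩ := hm m rfl
    refine ⟨m, hp ▸ hfar k k.lt_succ_self P hPk, hp ▸ hfar k k.lt_succ_self S ?_, ?_⟩
    · exact (h.splitsAt_congr hmod).2 hPk
    · rw [hnear T rfl]
      exact fin_two_eq_of_ne_of_ne (hb k) hr
  · obtain ⟨k, rfl⟩ := Nat.exists_eq_succ_of_ne_zero hk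
    obtain rfl : p = r := fin_two_eq_of_ne_of_ne hp hr
    obtain rfl : b k = p := fin_two_eq_of_ne_of_ne (hb k).symm hp
    obtain ⟨m, hm⟩ := h.exists_centered P k
    obtain ⟨hnear, -⟩ := hm m rfl
    exact ⟨m, hnear P rfl, hnear S (hmod.of_dvd (h.dvd_succ _)), hnear T hT.1⟩

theorem eq_or_eq_letter_of_splitsAt (hx : pstar x 3 ≤ 6) (h : IsToeplitzSkeleton n i b y)
    (hb : ∀ k, b (k + 1) ≠ b k) (hy : y ∈ orbitClosure x) {P S T k : ℕ} (hk : k ≠ 0)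
    (hmod : S ≡ P [MOD n (k + 3)]) (hT : SplitsAt n (fun _ => P) k T) :
    x P = x S ∨ x T = b k := by
  rcases eq_or_ne P S with rfl | hPS
  · exact Or.inl rfl
  have hmod' : S ≡ P [MOD n (k + 1)] := hmod.of_dvd (h.dvd (by omega))
  have hPT : P ≠ T := by rintro rfl; exact hT.2 rfl
  have hST : S ≠ T := by rintro rfl; exact hT.2 hmod'
  refine eq_or_eq_of_pstar_le_six hx hPS hPT hST fun p q r hpqr => ?_
  obtain ⟨m, hP, hS, hT⟩ : ∃ m, y (m + P) = p ∧ y (m + S) = q ∧ y (m + T) = r := by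
    by_cases hr : r = b k
    · exact hr ▸ exists_word_of_eq_letter h hb hPS hmod hT p q
    · obtain rfl : p = q := hpqr.resolve_right hr
      exact exists_word_of_ne_letter h hb hk hmod' hT p hr
  obtain ⟨M, hM⟩ := mem_orbitClosure_iff.1 hy (m + P + S + T + 1)
  refine ⟨M + m, ?_, ?_, ?_⟩ <;> rw [add_assoc, hM _ (by omega)] <;> assumption

theorem exists_monochromatic_class (hx : pstar x 3 ≤ 6) (h : IsToeplitzSkeleton n i b y)
    (hb : ∀ k, b (k + 1) ≠ b k) (hy : y ∈ orbitClosure x) {T k : ℕ} (hk : k ≠ 0)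
    (hT : x T = b k) :
    ∃ c, c ≡ T [MOD n k] ∧ ∀ t, t ≡ c [MOD n (k + 3)] → x t = b k := by
  by_cases hmono : ∀ t, t ≡ T [MOD n (k + 3)] → x t = b k
  · exact ⟨T, rfl, hmono⟩
  push Not at hmono
  obtain ⟨S, hS, hxS⟩ := hmono
  have hsplit : SplitsAt n (fun _ => T) k (T + n k) := h.splitsAt_add (i := fun _ => T) rfl
  refine ⟨T + n k, hsplit.1, fun t ht => ?_⟩
  have ht' : SplitsAt n (fun _ => T) k t :=
    (h.splitsAt_congr (ht.of_dvd (h.dvd (by omega)))).2 hsplit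
  exact (eq_or_eq_letter_of_splitsAt hx h hb hy hk hS ht').resolve_left fun hTS => hxS (hTS ▸ hT)

theorem exists_ne_and_window (h : IsToeplitzSkeleton n i b y) (hb : ∀ k, b (k + 1) ≠ b k)
    (hy : y ∈ orbitClosure x) (j : ℕ) :
    ∃ P, x P ≠ x (P + n j) ∧ ∀ t ≤ n j, SplitsAt n (fun _ => 0) 0 t → x (P + t) = b 0 := by
  obtain ⟨w, hw⟩ := h.exists_centered 0 (j + 1)
  obtain ⟨hnear, hfar⟩ := hw w rfl
  obtain ⟨M, hM⟩ := mem_orbitClosure_iff.1 hy (w + n j + 1)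
  have hcopy : ∀ t ≤ n j, x (M + w + t) = y (w + t) := fun t ht => by
    rw [add_assoc, hM _ (by omega)]
  refine ⟨M + w, ?_, fun t ht hsplit => ?_⟩
  · have hsplit : SplitsAt n (fun _ => 0) j (n j) := by
      simpa using h.splitsAt_add (i := fun _ => 0) (k := j) rfl
    have h0 : x (M + w) = b (j + 1) := (hcopy 0 (Nat.zero_le _)).trans (hnear 0 rfl)
    rw [h0, hcopy _ le_rfl, hfar j j.lt_succ_self _ hsplit]
    exact hb j
  · rw [hcopy t ht, hfar 0 j.succ_pos t hsplit]

theorem exists_center (hx : pstar x 3 ≤ 6) (h : IsToeplitzSkeleton n i b y)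
    (hb : ∀ k, b (k + 1) ≠ b k) (hy : y ∈ orbitClosure x) (K : ℕ) :
    ∃ P, ∀ k < K, ∀ T, SplitsAt n (fun _ => P) k T → x T = b k := by
  obtain ⟨P, hne, hwindow⟩ := exists_ne_and_window h hb hy (K + 4)
  refine ⟨P, fun k hk T hT => ?_⟩
  rcases eq_or_ne k 0 with rfl | hk0
  · by_contra hxT
    obtain ⟨c, hcT, hc⟩ :=
      exists_monochromatic_class hx h hb hy one_ne_zero (fin_two_eq_of_ne_of_ne hxT (hb 0))
    obtain ⟨t, ht, htc⟩ := exists_lt_add_modEq P c (h.pos 4)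
    have hPt : P + t ≡ T [MOD n 1] := (htc.of_dvd (h.dvd (by omega))).trans hcT
    have hsplit : SplitsAt n (fun _ => 0) 0 t := by
      refine ⟨h.modEq_zero _ _, fun ht0 => hT.2 ?_⟩
      exact hPt.symm.trans (by simpa using ht0.add_left P)
    have ht4 : t ≤ n (K + 4) := ht.le.trans (h.strictMono.monotone (by omega))
    exact hb 0 ((hc _ htc).symm.trans (hwindow t ht4 hsplit))
  · have hmod : P + n (K + 4) ≡ P [MOD n (k + 3)] := by
      simpa using (Nat.modEq_zero_iff_dvd.2 (h.dvd (by omega : k + 3 ≤ K + 4))).add_left P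
    exact (eq_or_eq_letter_of_splitsAt hx h hb hy hk0 hmod hT).resolve_left hne

theorem occursPeriodicallyIn_of_pstar_le_six (hx : pstar x 3 ≤ 6)
    (h : IsToeplitzSkeleton n i b y) (hb : ∀ k, b (k + 1) ≠ b k) (hy : y ∈ orbitClosure x) :
    OccursPeriodicallyIn x y := by
  intro N
  obtain ⟨P, hP⟩ := exists_center hx h hb hy N
  -- The prefix of length `N < n N` meets the class of `P` at most in the position `C`.
  let C := P % n N
  have hC : C ≡ P [MOD n N] := Nat.mod_modEq _ _
  obtain ⟨l, hl, -, hbl⟩ := exists_letter_eq hb N (x C)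
  obtain ⟨w, hw⟩ := h.exists_centered C l
  refine ⟨w, n (l + 1), h.pos _, fun z hz t ht => ?_⟩
  obtain ⟨hnear, hfar⟩ := hw z hz
  by_cases htP : t ≡ P [MOD n N]
  · obtain rfl : t = C := (Nat.mod_eq_of_lt (ht.trans (h.lt_apply N))).symm.trans htP
    rw [hnear _ rfl, hbl]
  · obtain ⟨k, -, hk, hsplit⟩ :=
      exists_splitsAt (i := fun _ => P) N.zero_le (h.modEq_zero t P) htP
    have hCk : C ≡ P [MOD n (k + 1)] := hC.of_dvd (h.dvd hk)
    rw [hP k hk t hsplit, hfar k (by omega) t ((h.splitsAt_const_congr hCk).2 hsplit)]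

end Alternating

theorem stmt12_general (x y : Seq2) (hx : pstar x 3 ≤ 6)
    (hy : SimpleToeplitz y) (hmem : y ∈ orbitClosure x) :
    x ∈ orbitClosure y ∧ Recurrent x ∧ UniformlyRecurrent x := by
  obtain ⟨n, i, b, h, hb⟩ := hy.exists_alternating_skeleton
  have hocc : OccursPeriodicallyIn x y := occursPeriodicallyIn_of_pstar_le_six hx h hb hmem
  have hrec : UniformlyRecurrent x := hocc.uniformlyRecurrent
  exact ⟨hocc.mem_orbitClosure, hrec.recurrent, hrec⟩

/-- a pattern Sturmian sequence whose orbit closure contains a simple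
Toeplitz sequence lies in the orbit closure of that sequence; in particular it is
recurrent, indeed uniformly recurrent. -/
theorem stmt12 (x y : Seq2) (hps : PatternSturmian x)
    (hy : SimpleToeplitz y) (hmem : y ∈ orbitClosure x) :
    x ∈ orbitClosure y ∧ Recurrent x ∧ UniformlyRecurrent x :=
  stmt12_general x y (hps 3 (by norm_num)).le hy hmem
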